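/- arXiv:1507.06167 — 2 statements merged into one kernel-verified Lean document; each statement's English description precedes it below -/
import Mathlib

section
/- If A is a set with operations ⟨a₁,…,aₙ⟩∘b, antidomain operations A₁,…,Aₙ and a binary operation ∧ satisfying the equational axioms (1)–(6), (8), (9) and (21)–(27), then A is representable by n-ary partial functions with ∧ as intersection: there exist a set X, an equivalence relation E on X, and an injective map θ from A into the n-ary partial functions on X such that every θ(a) relates only E-equivalent points, θ(⟨a⟩∘b) = ⟨θ(a₁),…,θ(aₙ)⟩∘θ(b), θ(Aᵢa) is defined at x with value xᵢ iff x₁,…,xₙ are pairwise E-equivalent and θ(a) is undefined at x, and θ(a ∧ b) is the intersection of θ(a) and θ(b) (defined at x with value y iff both θ(a) and θ(b) are defined at x with value y). -/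
/-!
Fix an index `j₀` and write `N a = A_{j₀} a`. Each `a` acts on the algebra by `R a : c ↦ ⟨Aa⟩∘c`
(restriction of `c` to the complement of the domain of `a`), and `R (N a)` is `c ↦ ⟨Da⟩∘c`.

The axioms `ax25`–`ax27` yield cancellation (`MAlgM.Ax.cancel`): if `⟨Da⟩∘b = ⟨Da⟩∘c` and
`⟨Aa⟩∘b = ⟨Aa⟩∘c`, then `b = c`. Indeed `ax26` and `ax27` show that `b ⋈ᵢ c` depends only on the
restrictions of `b` and `c`, so `b ⋈ᵢ c = b ⋈ᵢ b = πᵢ`, and `ax25` gives `b = c`. Cancellation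
makes the idempotent maps `R a` commute, so the monoid `K` they generate is commutative.

An *ultrafilter* is a submonoid `U ≤ K` containing `R a` or `R (N a)` for every `a`. It induces the
relation `c ∼ d ↔ ∃ e ∈ U, e c = e d`. The points of the representation are the pairs of an
ultrafilter and a `∼`-class other than that of `0`; two points are `E`-equivalent when they share
the ultrafilter, and `θ a` sends the classes of `v₁,…,vₙ` to the class of `⟨v⟩∘a` when this is not
the class of `0`. The twisted law `ax6` computes antidomains; `ax23` and `ax24` compute meets.
Injectivity follows from Zorn's lemma: for `a ≠ b`, a submonoid `U ≤ K` maximal with `e a ≠ e b`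
for all `e ∈ U` is an ultrafilter, by cancellation.
-/

universe u


/-- Composition of `n`-ary partial functions: `⟨f₁,…,fₙ⟩∘g` is defined at `x`
iff each `fᵢ(x)` is defined and `g` is defined at `(f₁(x),…,fₙ(x))`,
in which case its value is `g(f₁(x),…,fₙ(x))`. -/
def nComp {n : ℕ} {X : Type*} (f : Fin n → ((Fin n → X) →. X))
    (g : (Fin n → X) →. X) : (Fin n → X) →. X := fun x =>
  Part.mk (∃ h : ∀ i, (f i x).Dom, (g fun i => (f i x).get (h i)).Dom)
    (fun h => (g fun i => (f i x).get (h.choose i)).get h.choose_spec)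

/-- The `i`-th domain operation: `Dᵢf` is defined at `x` with value `xᵢ` iff `f(x)` is defined. -/
def nDom {n : ℕ} {X : Type*} (i : Fin n) (f : (Fin n → X) →. X) :
    (Fin n → X) →. X := fun x => Part.mk (f x).Dom (fun _ => x i)

/-- The `i`-th antidomain operation: `Aᵢf` is defined at `x` with value `xᵢ` iff `f(x)` is undefined. -/
def nAnti {n : ℕ} {X : Type*} (i : Fin n) (f : (Fin n → X) →. X) :
    (Fin n → X) →. X := fun x => Part.mk (¬ (f x).Dom) (fun _ => x i)


/-- An algebra with an `(n+1)`-ary composition `⟨a₁,…,aₙ⟩∘b`, `n` antidomain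
operations `A₁,…,Aₙ` and a binary operation `∧` (meet). -/
structure MAlgM (n : ℕ) (A : Type*) where
  comp : (Fin n → A) → A → A
  anti : Fin n → A → A
  meet : A → A → A

namespace MAlgM

variable {n : ℕ} {A : Type*} [Inhabited A]

/-- `⟨Aa⟩ = (A₁a,…,Aₙa)`. -/
def avec (M : MAlgM n A) (a : A) : Fin n → A := fun i => M.anti i a

/-- `0 := ⟨Ab⟩∘b` (independent of `b` by axiom (3)). -/
def zero (M : MAlgM n A) : A := M.comp (M.avec default) default

/-- `πᵢ := Aᵢ0`. -/
def pi (M : MAlgM n A) (i : Fin n) : A := M.anti i M.zero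

/-- `Dᵢa := Aᵢ(Aᵢa)`. -/
def dom (M : MAlgM n A) (i : Fin n) (a : A) : A := M.anti i (M.anti i a)

/-- `⟨Da⟩ = (D₁a,…,Dₙa)`. -/
def dvec (M : MAlgM n A) (a : A) : Fin n → A := fun i => M.dom i a

/-- The chain `⟨Da₁⟩∘(⟨Da₂⟩∘(⋯∘(⟨Daₙ⟩∘t)))`. -/
def dchain (M : MAlgM n A) (a : Fin n → A) (t : A) : A :=
  (List.ofFn a).foldr (fun u acc => M.comp (M.dvec u) acc) t

/-- `α +ᵢ β := Aᵢ(⟨Aα⟩∘Aᵢβ)`. -/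
def plus (M : MAlgM n A) (i : Fin n) (α β : A) : A :=
  M.anti i (M.comp (M.avec α) (M.anti i β))

/-- `a ⋈ᵢ b := Dᵢ(a ∧ b) +ᵢ (⟨Aa⟩∘Aᵢb)`. -/
def tie (M : MAlgM n A) (i : Fin n) (a b : A) : A :=
  M.plus i (M.dom i (M.meet a b)) (M.comp (M.avec a) (M.anti i b))

/-- The equational axioms (1)–(6), (8), (9) and (21)–(27). -/
structure Ax (M : MAlgM n A) : Prop where
  /-- (1) superassociativity -/
  ax1 : ∀ (a b : Fin n → A) (c : A),
    M.comp (fun i => M.comp a (b i)) c = M.comp a (M.comp b c)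
  /-- (2) `⟨π₁,…,πₙ⟩∘a = a` -/
  ax2 : ∀ a : A, M.comp M.pi a = a
  /-- (3) `⟨Aa⟩∘a = ⟨Ab⟩∘b` -/
  ax3 : ∀ a b : A, M.comp (M.avec a) a = M.comp (M.avec b) b
  /-- (4) `⟨a₁,…,0,…,aₙ⟩∘b = 0` with `0` in any position -/
  ax4 : ∀ (a : Fin n → A) (i : Fin n) (b : A),
    M.comp (Function.update a i M.zero) b = M.zero
  /-- (5) `⟨a⟩∘0 = 0` -/
  ax5 : ∀ a : Fin n → A, M.comp a M.zero = M.zero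
  /-- (6) the twisted laws for antidomain -/
  ax6 : ∀ (a : Fin n → A) (i : Fin n) (b : A),
    M.comp a (M.anti i b) = M.comp (M.avec (M.comp a b)) (M.dchain a (a i))
  /-- (8) `⟨Da⟩∘a = a` -/
  ax8 : ∀ a : A, M.comp (M.dvec a) a = a
  /-- (9) `Aᵢ(Aⱼa) = Aᵢ(Aₖa)` -/
  ax9 : ∀ (i j k : Fin n) (a : A), M.anti i (M.anti j a) = M.anti i (M.anti k a)
  /-- (21) `a ∧ a = a` -/
  ax21 : ∀ a : A, M.meet a a = a
  /-- (22) `a ∧ b = b ∧ a` -/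
  ax22 : ∀ a b : A, M.meet a b = M.meet b a
  /-- (23) `⟨a⟩∘(b ∧ c) = (⟨a⟩∘b) ∧ (⟨a⟩∘c)` -/
  ax23 : ∀ (a : Fin n → A) (b c : A),
    M.comp a (M.meet b c) = M.meet (M.comp a b) (M.comp a c)
  /-- (24) `⟨D(a ∧ b)⟩∘a = a ∧ b` -/
  ax24 : ∀ a b : A, M.comp (M.dvec (M.meet a b)) a = M.meet a b
  /-- (25) `⟨a ⋈₁ b, …, a ⋈ₙ b⟩∘a = ⟨a ⋈₁ b, …, a ⋈ₙ b⟩∘b` -/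
  ax25 : ∀ a b : A,
    M.comp (fun i => M.tie i a b) a = M.comp (fun i => M.tie i a b) b
  /-- (26) `⟨Ac⟩∘Dᵢ(⟨Ac⟩∘(a ∧ b)) +ᵢ ⟨Ac⟩∘(⟨A(⟨Ac⟩∘a)⟩∘Aᵢ(⟨Ac⟩∘b)) = ⟨Ac⟩∘(a ⋈ᵢ b)` -/
  ax26 : ∀ (i : Fin n) (c a b : A),
    M.plus i
      (M.comp (M.avec c) (M.dom i (M.comp (M.avec c) (M.meet a b))))
      (M.comp (M.avec c)
        (M.comp (M.avec (M.comp (M.avec c) a)) (M.anti i (M.comp (M.avec c) b)))) =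
    M.comp (M.avec c) (M.tie i a b)
  /-- (27) `⟨Da⟩∘(b ⋈ᵢ c) +ᵢ ⟨Aa⟩∘(b ⋈ᵢ c) = b ⋈ᵢ c` -/
  ax27 : ∀ (i : Fin n) (a b c : A),
    M.plus i (M.comp (M.dvec a) (M.tie i b c)) (M.comp (M.avec a) (M.tie i b c)) =
      M.tie i b c

end MAlgM

namespace MAlgM

/-! ### Restriction operators -/

section Restriction

variable {n : ℕ} {A : Type u} {M : MAlgM n A}

/-- Restriction to the complement of the domain of `a`: the map `c ↦ ⟨Aa⟩∘c`. -/
def res (M : MAlgM n A) (a : A) : Function.End A := fun c => M.comp (M.avec a) c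

/-- The monoid of self-maps of `A` generated by the restrictions. -/
def resMonoid (M : MAlgM n A) : Submonoid (Function.End A) :=
  Submonoid.closure (Set.range M.res)

lemma res_mem (a : A) : M.res a ∈ M.resMonoid := Submonoid.subset_closure ⟨a, rfl⟩

/-- `c` and `d` agree modulo `U`: some map in `U` sends them to the same element. -/
def Agree (U : Submonoid (Function.End A)) (c d : A) : Prop := ∃ e ∈ U, e c = e d

lemma Agree.refl (U : Submonoid (Function.End A)) (c : A) : Agree U c c := ⟨1, U.one_mem, rfl⟩

lemma Agree.symm {U : Submonoid (Function.End A)} {c d : A} : Agree U c d → Agree U d c :=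
  fun ⟨e, he, h⟩ => ⟨e, he, h.symm⟩

variable [Inhabited A]

namespace Ax

lemma res_self (h : M.Ax) (a : A) : M.res a a = M.zero := h.ax3 a default

lemma res_zero (h : M.Ax) (c : A) : M.res M.zero c = c := h.ax2 c

lemma res_apply_zero (h : M.Ax) (a : A) : M.res a M.zero = M.zero := h.ax5 _

lemma comp_eq_zero (h : M.Ax) (v : Fin n → A) (i : Fin n) (hv : v i = M.zero) (b : A) :
    M.comp v b = M.zero := by
  have := h.ax4 v i b
  rwa [← hv, Function.update_eq_self, hv] at this

lemma avec_anti (h : M.Ax) (j : Fin n) (a : A) : M.avec (M.anti j a) = M.dvec a := by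
  funext i
  exact h.ax9 i j i a

lemma res_anti_eq (h : M.Ax) (j : Fin n) (a c : A) :
    M.res (M.anti j a) c = M.comp (M.dvec a) c := by
  rw [res, h.avec_anti]

lemma res_anti_self (h : M.Ax) (j : Fin n) (a : A) : M.res (M.anti j a) a = a := by
  rw [h.res_anti_eq, h.ax8]

lemma res_anti_anti_anti (h : M.Ax) (j k i : Fin n) (a : A) :
    M.res (M.anti j (M.anti k a)) (M.anti i a) = M.anti i a := by
  rw [h.ax9 j k i, h.res_anti_self]

lemma dchain_avec (h : M.Ax) (a : A) (i : Fin n) :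
    M.dchain (M.avec a) (M.anti i a) = M.anti i a := by
  have key : ∀ l : List A, (∀ u ∈ l, ∃ k, u = M.anti k a) →
      l.foldr (fun u acc => M.comp (M.dvec u) acc) (M.anti i a) = M.anti i a := by
    intro l
    induction l with
    | nil => intro _; rfl
    | cons u l ih =>
      intro hl
      obtain ⟨k, hk⟩ := hl u (by simp)
      rw [List.foldr_cons, ih (fun w hw => hl w (by simp [hw])), ← h.res_anti_eq i, hk,
        h.res_anti_anti_anti]
  apply key
  intro u hu
  obtain ⟨k, rfl⟩ := (List.mem_ofFn' _ _).1 hu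
  exact ⟨k, rfl⟩

/-- The twisted law specialised to antidomain tuples. -/
lemma res_anti_twist (h : M.Ax) (a b : A) (i : Fin n) :
    M.res a (M.anti i b) = M.res (M.res a b) (M.anti i a) := by
  have := h.ax6 (M.avec a) i b
  rw [show M.avec a i = M.anti i a from rfl, h.dchain_avec] at this
  exact this

lemma res_comp (h : M.Ax) (a : A) (v : Fin n → A) (c : A) :
    M.res a (M.comp v c) = M.comp (fun i => M.res a (v i)) c := (h.ax1 _ _ _).symm

lemma res_res (h : M.Ax) (a b c : A) :
    M.res a (M.res b c) = M.res (M.res a b) (M.res a c) := by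
  have e : M.res a (M.res b c) = M.comp (fun i => M.res a (M.anti i b)) c := h.res_comp _ _ _
  rw [e, funext (h.res_anti_twist a b)]
  exact h.ax1 _ _ _

lemma res_idem (h : M.Ax) (a c : A) : M.res a (M.res a c) = M.res a c := by
  rw [h.res_res, h.res_self, h.res_zero]

lemma res_anti_apply (h : M.Ax) (a : A) (j i : Fin n) :
    M.res (M.anti j a) (M.anti i a) = M.zero := by
  have : M.res (M.anti j a) = M.res (M.anti i a) := by
    funext c
    rw [h.res_anti_eq, h.res_anti_eq]
  rw [this, h.res_self]

lemma res_anti_res (h : M.Ax) (j : Fin n) (a c : A) :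
    M.res (M.anti j a) (M.res a c) = M.zero := by
  have e : M.res (M.anti j a) (M.res a c)
      = M.comp (fun i => M.res (M.anti j a) (M.anti i a)) c := h.res_comp _ _ _
  rw [e]
  exact h.comp_eq_zero _ j (h.res_anti_apply a j j) c

lemma tie_self (h : M.Ax) (i : Fin n) (b : A) : M.tie i b b = M.pi i := by
  have h1 : M.comp (M.avec b) (M.anti i b) = M.anti i b := by
    have := h.res_anti_twist b b i
    rwa [h.res_self, h.res_zero] at this
  rw [tie, h.ax21, h1, plus]
  exact congrArg (M.anti i) (h.res_self (M.dom i b))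

lemma res_meet (h : M.Ax) (a b c : A) :
    M.res a (M.meet b c) = M.meet (M.res a b) (M.res a c) := h.ax23 _ _ _

/-- The restriction of `b ⋈ᵢ c` depends on `b` and `c` only through their restrictions. -/
lemma res_tie_congr (h : M.Ax) (i : Fin n) {a b c b' c' : A} (hb : M.res a b = M.res a b')
    (hc : M.res a c = M.res a c') : M.res a (M.tie i b c) = M.res a (M.tie i b' c') := by
  have hm : M.comp (M.avec a) (M.meet b c) = M.comp (M.avec a) (M.meet b' c') := by
    have := h.res_meet a b c
    rw [hb, hc, ← h.res_meet] at this
    exact this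
  have h1 := h.ax26 i a b c
  have h2 := h.ax26 i a b' c'
  change M.comp (M.avec a) b = M.comp (M.avec a) b' at hb
  change M.comp (M.avec a) c = M.comp (M.avec a) c' at hc
  rw [hm, hb, hc, h2] at h1
  exact h1.symm

/-- Cancellation: an element is determined by its restrictions to the domain of `a` and to the
complement of that domain. -/
lemma cancel (h : M.Ax) (j : Fin n) {a b c : A} (hD : M.res (M.anti j a) b = M.res (M.anti j a) c)
    (hA : M.res a b = M.res a c) : b = c := by
  have key : ∀ i, M.tie i b c = M.pi i := by
    intro i
    have h1 := h.ax27 i a b c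
    rw [← h.res_anti_eq j] at h1
    have e1 := h.res_tie_congr i (rfl : M.res (M.anti j a) b = _) hD.symm
    have e2 := h.res_tie_congr i (rfl : M.res a b = _) hA.symm
    rw [e1, show M.comp (M.avec a) (M.tie i b c) = M.comp (M.avec a) (M.tie i b b) from e2,
      h.res_anti_eq, h.ax27, h.tie_self] at h1
    exact h1.symm
  have := h.ax25 b c
  rw [funext key] at this
  change M.comp M.pi b = M.comp M.pi c at this
  rwa [h.ax2, h.ax2] at this

lemma res_comm (h : M.Ax) (j : Fin n) (a b c : A) :
    M.res a (M.res b c) = M.res b (M.res a c) := by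
  apply h.cancel j (a := a)
  · rw [h.res_anti_res, h.res_res _ b, h.res_anti_res, h.res_apply_zero]
  · rw [h.res_idem, h.res_res a b (M.res a c), h.res_idem, ← h.res_res]

/-! ### The monoid generated by the restrictions -/

lemma mon_comp (h : M.Ax) {e : Function.End A} (he : e ∈ M.resMonoid) (v : Fin n → A) (c : A) :
    e (M.comp v c) = M.comp (fun i => e (v i)) c := by
  induction he using Submonoid.closure_induction generalizing v c with
  | mem x hx => obtain ⟨a, rfl⟩ := hx; exact h.res_comp a v c
  | one => rfl
  | mul x y _ _ hx hy =>
    change x (y _) = _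
    rw [hy, hx]
    rfl

lemma mon_zero (h : M.Ax) {e : Function.End A} (he : e ∈ M.resMonoid) : e M.zero = M.zero := by
  induction he using Submonoid.closure_induction with
  | mem x hx => obtain ⟨a, rfl⟩ := hx; exact h.res_apply_zero a
  | one => rfl
  | mul x y _ _ hx hy =>
    change x (y _) = _
    rw [hy, hx]

lemma mon_meet (h : M.Ax) {e : Function.End A} (he : e ∈ M.resMonoid) (b c : A) :
    e (M.meet b c) = M.meet (e b) (e c) := by
  induction he using Submonoid.closure_induction generalizing b c with
  | mem x hx => obtain ⟨a, rfl⟩ := hx; exact h.res_meet a b c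
  | one => rfl
  | mul x y _ _ hx hy =>
    change x (y _) = _
    rw [hy, hx]
    rfl

lemma mon_res (h : M.Ax) {e : Function.End A} (he : e ∈ M.resMonoid) (w c : A) :
    e (M.res w c) = M.res (e w) (e c) := by
  induction he using Submonoid.closure_induction generalizing w c with
  | mem x hx => obtain ⟨a, rfl⟩ := hx; exact h.res_res a w c
  | one => rfl
  | mul x y _ _ hx hy =>
    change x (y _) = _
    rw [hy, hx]
    rfl

lemma mon_res_comm (h : M.Ax) (j : Fin n) {e : Function.End A} (he : e ∈ M.resMonoid) (a c : A) :
    e (M.res a c) = M.res a (e c) := by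
  induction he using Submonoid.closure_induction generalizing c with
  | mem x hx => obtain ⟨b, rfl⟩ := hx; exact h.res_comm j b a c
  | one => rfl
  | mul x y _ _ hx hy =>
    change x (y _) = _
    rw [hy, hx]
    rfl

lemma mon_comm (h : M.Ax) (j : Fin n) {e f : Function.End A} (he : e ∈ M.resMonoid)
    (hf : f ∈ M.resMonoid) (c : A) : e (f c) = f (e c) := by
  induction hf using Submonoid.closure_induction generalizing c with
  | mem x hx => obtain ⟨b, rfl⟩ := hx; exact h.mon_res_comm j he b c
  | one => rfl
  | mul x y _ _ hx hy =>
    change e (x (y _)) = x (y _)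
    rw [hx, hy]

end Ax

/-! ### Ultrafilters of restrictions -/

/-- Ultrafilters of restrictions: submonoids of `resMonoid` that, for every `a`, contain the
restriction to the complement of the domain of `a` or the restriction to that domain. Properness
is not required: an improper ultrafilter identifies every element with `0` and carries no
points. -/
structure IsUltra (M : MAlgM n A) (j : Fin n) (U : Submonoid (Function.End A)) : Prop where
  le : U ≤ M.resMonoid
  res_or : ∀ a, M.res a ∈ U ∨ M.res (M.anti j a) ∈ U

lemma IsUltra.trans (h : M.Ax) {j : Fin n} {U : Submonoid (Function.End A)} (hU : M.IsUltra j U)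
    {c d f : A} : Agree U c d → Agree U d f → Agree U c f := by
  rintro ⟨e, he, h1⟩ ⟨e', he', h2⟩
  refine ⟨e * e', U.mul_mem he he', ?_⟩
  change e (e' c) = e (e' f)
  rw [← h2, h.mon_comm j (hU.le he) (hU.le he'), h1, h.mon_comm j (hU.le he) (hU.le he')]

lemma IsUltra.comp_congr (h : M.Ax) {j : Fin n} {U : Submonoid (Function.End A)}
    (hU : M.IsUltra j U) {v w : Fin n → A} (hvw : ∀ i, Agree U (v i) (w i)) (a : A) :
    Agree U (M.comp v a) (M.comp w a) := by
  choose e he h1 using hvw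
  -- a single witness for all coordinates: the product of the finitely many witnesses
  have key : ∀ s : Finset (Fin n), ∃ f ∈ U, ∀ i ∈ s, f (v i) = f (w i) := by
    intro s
    induction s using Finset.induction_on with
    | empty => exact ⟨1, U.one_mem, by simp⟩
    | insert k s _ ih =>
      obtain ⟨f, hf, h2⟩ := ih
      refine ⟨f * e k, U.mul_mem hf (he k), ?_⟩
      intro i hi
      change f (e k (v i)) = f (e k (w i))
      rcases Finset.mem_insert.1 hi with rfl | hi
      · rw [h1]
      · rw [h.mon_comm j (hU.le hf) (hU.le (he k)), h2 i hi,
          h.mon_comm j (hU.le hf) (hU.le (he k))]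
  obtain ⟨f, hf, h2⟩ := key Finset.univ
  refine ⟨f, hf, ?_⟩
  rw [h.mon_comp (hU.le hf), h.mon_comp (hU.le hf)]
  exact congrArg (fun u => M.comp u a) (funext fun i => h2 i (Finset.mem_univ i))

lemma IsUltra.dom_mem (h : M.Ax) {j : Fin n} {U : Submonoid (Function.End A)}
    (hU : M.IsUltra j U) {c : A} (hc : ¬ Agree U c M.zero) : M.res (M.anti j c) ∈ U := by
  refine (hU.res_or c).resolve_left fun hr => hc ⟨_, hr, ?_⟩
  rw [h.res_self, h.res_apply_zero]

lemma IsUltra.comp_zero (h : M.Ax) {j : Fin n} {U : Submonoid (Function.End A)}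
    (hU : M.IsUltra j U) {v : Fin n → A} {i : Fin n} (hi : Agree U (v i) M.zero) (a : A) :
    Agree U (M.comp v a) M.zero := by
  obtain ⟨e, he, h1⟩ := hi
  refine ⟨e, he, ?_⟩
  rw [h.mon_comp (hU.le he), h.mon_zero (hU.le he)]
  exact h.comp_eq_zero _ i (by rw [h1, h.mon_zero (hU.le he)]) a

lemma IsUltra.res_agree (h : M.Ax) {j : Fin n} {U : Submonoid (Function.End A)}
    (hU : M.IsUltra j U) {w : A} (hw : Agree U w M.zero) (t : A) : Agree U (M.res w t) t := by
  obtain ⟨e, he, h1⟩ := hw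
  refine ⟨e, he, ?_⟩
  rw [h.mon_res (hU.le he), h1, h.mon_zero (hU.le he), h.res_zero]

lemma IsUltra.res_agree_zero (h : M.Ax) {j : Fin n} {U : Submonoid (Function.End A)}
    (hU : M.IsUltra j U) {w : A} (hw : ¬ Agree U w M.zero) (t : A) :
    Agree U (M.res w t) M.zero := by
  refine ⟨_, hU.dom_mem h hw, ?_⟩
  rw [h.res_anti_res, h.res_apply_zero]

lemma IsUltra.dchain_agree (h : M.Ax) {j : Fin n} {U : Submonoid (Function.End A)}
    (hU : M.IsUltra j U) {v : Fin n → A} (hv : ∀ i, ¬ Agree U (v i) M.zero) (t : A) :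
    Agree U (M.dchain v t) t := by
  have key : ∀ l : List A, (∀ u ∈ l, ¬ Agree U u M.zero) →
      Agree U (l.foldr (fun u acc => M.comp (M.dvec u) acc) t) t := by
    intro l
    induction l with
    | nil => intro _; exact Agree.refl U t
    | cons u l ih =>
      intro hl
      refine hU.trans h ?_ (ih fun w hw => hl w (by simp [hw]))
      rw [List.foldr_cons, ← h.res_anti_eq j]
      exact ⟨_, hU.dom_mem h (hl u (by simp)), h.res_idem _ _⟩
  apply key
  intro u hu
  obtain ⟨k, rfl⟩ := (List.mem_ofFn' _ _).1 hu
  exact hv k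

/-- If `⟨v⟩∘a` vanishes modulo `U`, then `⟨v⟩∘Aᵢa` is `vᵢ` modulo `U`. -/
lemma IsUltra.anti_agree (h : M.Ax) {j : Fin n} {U : Submonoid (Function.End A)}
    (hU : M.IsUltra j U) {v : Fin n → A} (hv : ∀ i, ¬ Agree U (v i) M.zero) {a : A}
    (ha : Agree U (M.comp v a) M.zero) (i : Fin n) : Agree U (M.comp v (M.anti i a)) (v i) := by
  rw [h.ax6]
  exact hU.trans h (hU.res_agree h ha _) (hU.dchain_agree h hv _)

/-- If `⟨v⟩∘a` does not vanish modulo `U`, then `⟨v⟩∘Aᵢa` does. -/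
lemma IsUltra.anti_agree_zero (h : M.Ax) {j : Fin n} {U : Submonoid (Function.End A)}
    (hU : M.IsUltra j U) {v : Fin n → A} {a : A}
    (ha : ¬ Agree U (M.comp v a) M.zero) (i : Fin n) :
    Agree U (M.comp v (M.anti i a)) M.zero := by
  rw [h.ax6]
  exact hU.res_agree_zero h ha _

lemma IsUltra.meet_agree_left (h : M.Ax) {j : Fin n} {U : Submonoid (Function.End A)}
    (hU : M.IsUltra j U) {p q : A} (hm : ¬ Agree U (M.meet p q) M.zero) :
    Agree U (M.meet p q) p := by
  refine ⟨_, hU.dom_mem h hm, ?_⟩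
  rw [h.res_anti_self, h.res_anti_eq, h.ax24]

lemma IsUltra.meet_agree (h : M.Ax) {j : Fin n} {U : Submonoid (Function.End A)}
    (hU : M.IsUltra j U) {p q : A} (hpq : Agree U p q) : Agree U (M.meet p q) p := by
  obtain ⟨e, he, h1⟩ := hpq
  refine ⟨e, he, ?_⟩
  rw [h.mon_meet (hU.le he), ← h1, h.ax21]

/-- Distinct elements are separated by an ultrafilter. -/
lemma Ax.exists_ultra (h : M.Ax) (j : Fin n) {a b : A} (hab : a ≠ b) :
    ∃ U, M.IsUltra j U ∧ ¬ Agree U a b := by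
  let S : Set (Submonoid (Function.End A)) := {F | F ≤ M.resMonoid ∧ ∀ e ∈ F, e a ≠ e b}
  have hbot : (⊥ : Submonoid (Function.End A)) ∈ S := by
    refine ⟨bot_le, fun e he => ?_⟩
    rw [Submonoid.mem_bot.1 he]
    exact hab
  obtain ⟨U, -, hmax⟩ := zorn_le_nonempty₀ S (by
    intro c hc hchain y hy
    refine ⟨sSup c, ⟨sSup_le fun F hF => (hc hF).1, ?_⟩, fun F hF => le_sSup hF⟩
    intro e he
    obtain ⟨F, hF, heF⟩ := (Submonoid.mem_sSup_of_directedOn ⟨y, hy⟩ hchain.directedOn).1 he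
    exact (hc hF).2 e heF) ⊥ hbot
  have hUS := hmax.prop
  -- a restriction outside `U` identifies `a` and `b` after composition with some `e ∈ U`
  have ext : ∀ g : A, M.res g ∉ U → ∃ e ∈ U, e (M.res g a) = e (M.res g b) := by
    intro g hg
    by_contra! hne
    let V : Submonoid (Function.End A) :=
      { carrier := {x | ∃ e ∈ U, x = e ∨ x = e * M.res g}
        one_mem' := ⟨1, U.one_mem, Or.inl rfl⟩
        mul_mem' := by
          rintro x y ⟨e, he, hx⟩ ⟨f, hf, hy⟩
          refine ⟨e * f, U.mul_mem he hf, ?_⟩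
          have hc : M.res g * f = f * M.res g :=
            funext fun c => (h.mon_res_comm j (hUS.1 hf) g c).symm
          have hi : M.res g * M.res g = M.res g := funext fun c => h.res_idem g c
          rcases hx with rfl | rfl <;> rcases hy with rfl | rfl
          · exact Or.inl rfl
          · exact Or.inr (mul_assoc _ _ _).symm
          · exact Or.inr (by rw [mul_assoc, hc, mul_assoc])
          · refine Or.inr ?_
            rw [mul_assoc, ← mul_assoc (M.res g), hc, mul_assoc f, hi, mul_assoc] }
    have hVS : V ∈ S := by
      refine ⟨?_, ?_⟩
      · rintro x ⟨e, he, rfl | rfl⟩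
        · exact hUS.1 he
        · exact Submonoid.mul_mem _ (hUS.1 he) (res_mem g)
      · rintro x ⟨e, he, rfl | rfl⟩
        · exact hUS.2 _ he
        · exact hne e he
    have hUV : U ≤ V := fun e he => ⟨e, he, Or.inl rfl⟩
    exact hg (hmax.le_of_ge hVS hUV ⟨1, U.one_mem, Or.inr (one_mul _).symm⟩)
  refine ⟨U, ⟨hUS.1, fun g => ?_⟩, fun ⟨e, he, h1⟩ => hUS.2 e he h1⟩
  by_contra! hg
  obtain ⟨e, he, h1⟩ := ext g hg.1
  obtain ⟨f, hf, h2⟩ := ext _ hg.2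
  refine hUS.2 (e * f) (U.mul_mem he hf) (h.cancel j (a := g) ?_ ?_)
  · change M.res _ (e (f a)) = M.res _ (e (f b))
    rw [← h.mon_res_comm j (hUS.1 he), ← h.mon_res_comm j (hUS.1 hf), h2,
      h.mon_res_comm j (hUS.1 hf), h.mon_res_comm j (hUS.1 he)]
  · change M.res _ (e (f a)) = M.res _ (e (f b))
    rw [h.mon_comm j (hUS.1 he) (hUS.1 hf), ← h.mon_res_comm j (hUS.1 hf),
      ← h.mon_res_comm j (hUS.1 he), h1, h.mon_res_comm j (hUS.1 he),
      h.mon_res_comm j (hUS.1 hf), h.mon_comm j (hUS.1 he) (hUS.1 hf)]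

/-! ### The representation -/

/-- The class of `c` modulo `U`, tagged with `U`. -/
def tag (U : Submonoid (Function.End A)) (c : A) : Submonoid (Function.End A) × Set A :=
  (U, {d | Agree U c d})

lemma IsUltra.tag_eq (h : M.Ax) {j : Fin n} {U : Submonoid (Function.End A)}
    (hU : M.IsUltra j U) {c d : A} : tag U c = tag U d ↔ Agree U c d := by
  constructor
  · intro hcd
    have : d ∈ (tag U c).2 := by
      rw [hcd]
      exact Agree.refl U d
    exact this
  · intro hcd
    refine Prod.ext rfl (Set.ext fun f => ?_)
    exact ⟨fun hf => hU.trans h hcd.symm hf, fun hf => hU.trans h hcd hf⟩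

/-- The points of the representation: classes, other than that of `0`, modulo ultrafilters. -/
def Point (M : MAlgM n A) (j : Fin n) : Type u :=
  {p : Submonoid (Function.End A) × Set A //
    ∃ U c, M.IsUltra j U ∧ ¬ Agree U c M.zero ∧ p = tag U c}

/-- The elements `vᵢ` represent the points `xᵢ`, all belonging to the ultrafilter `U`. -/
structure Rep (M : MAlgM n A) (j : Fin n) (x : Fin n → Point M j)
    (U : Submonoid (Function.End A)) (v : Fin n → A) : Prop where
  ultra : M.IsUltra j U
  eq : ∀ i, (x i).1 = tag U (v i)

lemma Point.ne_zero (h : M.Ax) {j : Fin n} (p : Point M j) {U : Submonoid (Function.End A)}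
    {c : A} (hp : p.1 = tag U c) : ¬ Agree U c M.zero := by
  obtain ⟨V, d, hV, hd, hpd⟩ := p.2
  rw [hp] at hpd
  obtain rfl : U = V := congrArg Prod.fst hpd
  exact fun hc => hd (hV.trans h ((hV.tag_eq h).1 hpd).symm hc)

lemma exists_rep {j : Fin n} (x : Fin n → Point M j) (hx : ∀ i k, (x i).1.1 = (x k).1.1) :
    ∃ U v, Rep M j x U v := by
  choose U v hU hv hx' using fun i => (x i).2
  refine ⟨U j, v, hU j, fun i => ?_⟩
  have : U i = U j := by
    have := hx i j
    rwa [hx' i, hx' j] at this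
  rw [hx' i, this]

lemma Rep.related {j : Fin n} {x : Fin n → Point M j} {U : Submonoid (Function.End A)}
    {v : Fin n → A} (r : Rep M j x U v) (i k : Fin n) : (x i).1.1 = (x k).1.1 := by
  rw [r.eq, r.eq]
  rfl

lemma Rep.ne_zero (h : M.Ax) {j : Fin n} {x : Fin n → Point M j}
    {U : Submonoid (Function.End A)} {v : Fin n → A} (r : Rep M j x U v) (i : Fin n) :
    ¬ Agree U (v i) M.zero := (x i).ne_zero h (r.eq i)

/-- The graph of the partial function representing `a`. -/
def Graph (M : MAlgM n A) (j : Fin n) (a : A) (x : Fin n → Point M j) (y : Point M j) : Prop :=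
  ∃ U v, Rep M j x U v ∧ y.1 = tag U (M.comp v a)

lemma Rep.graph_iff (h : M.Ax) {j : Fin n} {x : Fin n → Point M j}
    {U : Submonoid (Function.End A)} {v : Fin n → A} (r : Rep M j x U v) (a : A) (y : Point M j) :
    Graph M j a x y ↔ y.1 = tag U (M.comp v a) := by
  refine ⟨?_, fun hy => ⟨U, v, r, hy⟩⟩
  rintro ⟨V, w, s, hy⟩
  have hvw : ∀ i, tag V (w i) = tag U (v i) := fun i => (s.eq i).symm.trans (r.eq i)
  obtain rfl : V = U := congrArg Prod.fst (hvw j)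
  rw [hy, r.ultra.tag_eq h]
  exact r.ultra.comp_congr h (fun i => (r.ultra.tag_eq h).1 (hvw i)) a

/-- The partial function representing `a`; its value is chosen from the graph, which is
single-valued. -/
noncomputable def rep (M : MAlgM n A) (j : Fin n) (a : A) :
    (Fin n → Point M j) →. Point M j := fun x =>
  Part.mk (∃ y, Graph M j a x y) (fun hx => hx.choose)

lemma Ax.mem_rep (h : M.Ax) {j : Fin n} {a : A} {x : Fin n → Point M j} {y : Point M j} :
    y ∈ rep M j a x ↔ Graph M j a x y := by
  constructor
  · rintro ⟨hx, rfl⟩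
    exact hx.choose_spec
  · intro hy
    refine ⟨⟨y, hy⟩, ?_⟩
    have hc : Graph M j a x _ := (⟨y, hy⟩ : ∃ y, Graph M j a x y).choose_spec
    obtain ⟨U, v, r, hy'⟩ := hy
    exact Subtype.ext (((r.graph_iff h a _).1 hc).trans hy'.symm)

lemma Rep.mem_rep (h : M.Ax) {j : Fin n} {x : Fin n → Point M j}
    {U : Submonoid (Function.End A)} {v : Fin n → A} (r : Rep M j x U v) (a : A) (y : Point M j) :
    y ∈ rep M j a x ↔ y.1 = tag U (M.comp v a) := h.mem_rep.trans (r.graph_iff h a y)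

lemma Ax.rep_of_mem (h : M.Ax) {j : Fin n} {a : A} {x : Fin n → Point M j} {y : Point M j}
    (hy : y ∈ rep M j a x) : ∃ U v, Rep M j x U v := by
  obtain ⟨U, v, r, -⟩ := h.mem_rep.1 hy
  exact ⟨U, v, r⟩

/-- The point given by a class that is not the class of `0`. -/
def IsUltra.point {j : Fin n} {U : Submonoid (Function.End A)} (hU : M.IsUltra j U) {c : A}
    (hc : ¬ Agree U c M.zero) : Point M j := ⟨tag U c, U, c, hU, hc, rfl⟩

lemma Rep.dom_iff (h : M.Ax) {j : Fin n} {x : Fin n → Point M j}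
    {U : Submonoid (Function.End A)} {v : Fin n → A} (r : Rep M j x U v) (a : A) :
    (rep M j a x).Dom ↔ ¬ Agree U (M.comp v a) M.zero := by
  rw [Part.dom_iff_mem]
  constructor
  · rintro ⟨y, hy⟩
    exact y.ne_zero h ((r.mem_rep h a y).1 hy)
  · intro ha
    exact ⟨r.ultra.point ha, (r.mem_rep h a _).2 rfl⟩

end Restriction

end MAlgM

lemma mem_nComp {n : ℕ} {X : Type*} (f : Fin n → ((Fin n → X) →. X)) (g : (Fin n → X) →. X)
    (x : Fin n → X) (y : X) :
    y ∈ nComp f g x ↔ ∃ z : Fin n → X, (∀ i, z i ∈ f i x) ∧ y ∈ g z := by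
  constructor
  · rintro ⟨hd, rfl⟩
    exact ⟨fun i => (f i x).get (hd.choose i), fun i => Part.get_mem _, Part.get_mem _⟩
  · rintro ⟨z, hz, hy⟩
    have hd : ∀ i, (f i x).Dom := fun i => (hz i).1
    obtain rfl : (fun i => (f i x).get (hd i)) = z := funext fun i => (hz i).2
    exact ⟨⟨hd, hy.1⟩, hy.2⟩

open MAlgM

/-- Every algebra with meet satisfying the equational axioms (1)–(6), (8), (9) and
(21)–(27) is representable by `n`-ary partial functions with `∧` as intersection. -/
theorem meet_representation_theorem {n : ℕ} (hn : 1 ≤ n) {A : Type u}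
    [Inhabited A] (M : MAlgM n A) (hM : M.Ax) :
    ∃ (X : Type u) (E : X → X → Prop), Equivalence E ∧
      ∃ θ : A → ((Fin n → X) →. X),
        Function.Injective θ ∧
        (∀ (a : A) (x : Fin n → X) (y : X), y ∈ θ a x →
          (∀ i j : Fin n, E (x i) (x j)) ∧ (∀ i : Fin n, E (x i) y)) ∧
        (∀ (a : Fin n → A) (b : A),
          θ (M.comp a b) = nComp (fun i => θ (a i)) (θ b)) ∧
        (∀ (a : A) (i : Fin n) (x : Fin n → X) (y : X),
          y ∈ θ (M.anti i a) x ↔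
            y = x i ∧ (∀ j k : Fin n, E (x j) (x k)) ∧ ¬ (θ a x).Dom) ∧
        (∀ (a b : A) (x : Fin n → X) (y : X),
          y ∈ θ (M.meet a b) x ↔ y ∈ θ a x ∧ y ∈ θ b x) := by
  let j : Fin n := ⟨0, hn⟩
  refine ⟨Point M j, fun p q => p.1.1 = q.1.1, ⟨fun _ => rfl, Eq.symm, Eq.trans⟩, rep M j,
    ?_, ?_, ?_, ?_, ?_⟩
  · intro a b hab
    by_contra hne
    obtain ⟨U, hU, hUab⟩ := hM.exists_ultra j hne
    have hz : ¬ (Agree U a M.zero ∧ Agree U b M.zero) :=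
      fun hh => hUab (hU.trans hM hh.1 hh.2.symm)
    have hpi : ∀ i, ¬ Agree U (M.pi i) M.zero := by
      intro i hi
      refine hz ⟨?_, ?_⟩
      · simpa only [hM.ax2] using hU.comp_zero hM hi a
      · simpa only [hM.ax2] using hU.comp_zero hM hi b
    -- evaluate at the tuple of the classes of the projections
    have r : Rep M j (fun i => hU.point (hpi i)) U M.pi := ⟨hU, fun i => rfl⟩
    have hmem : ∀ y : Point M j, y.1 = tag U a ↔ y.1 = tag U b := by
      intro y
      have h1 := r.mem_rep hM a y
      have h2 := r.mem_rep hM b y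
      rw [hM.ax2] at h1 h2
      rw [← h1, ← h2, hab]
    by_cases ha : Agree U a M.zero
    · have hb : ¬ Agree U b M.zero := fun hb => hz ⟨ha, hb⟩
      exact hUab ((hU.tag_eq hM).1 ((hmem (hU.point hb)).2 rfl)).symm
    · exact hUab ((hU.tag_eq hM).1 ((hmem (hU.point ha)).1 rfl))
  · intro a x y hy
    obtain ⟨U, v, r⟩ := hM.rep_of_mem hy
    refine ⟨r.related, fun i => ?_⟩
    change (x i).1.1 = y.1.1
    rw [(r.mem_rep hM a y).1 hy, r.eq]
    rfl
  · intro a b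
    funext x
    refine Part.ext fun y => ?_
    rw [mem_nComp]
    constructor
    · intro hy
      obtain ⟨U, v, r⟩ := hM.rep_of_mem hy
      rw [r.mem_rep hM, ← hM.ax1] at hy
      have hv : ∀ i, ¬ Agree U (M.comp v (a i)) M.zero :=
        fun i hi => y.ne_zero hM hy (r.ultra.comp_zero hM (v := fun i => M.comp v (a i)) hi b)
      refine ⟨fun i => r.ultra.point (hv i), fun i => (r.mem_rep hM _ _).2 rfl, ?_⟩
      have s : Rep M j (fun i => r.ultra.point (hv i)) U (fun i => M.comp v (a i)) :=
        ⟨r.ultra, fun i => rfl⟩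
      exact (s.mem_rep hM b y).2 hy
    · rintro ⟨z, hz, hy⟩
      obtain ⟨U, v, r⟩ := hM.rep_of_mem (hz j)
      have s : Rep M j z U (fun i => M.comp v (a i)) :=
        ⟨r.ultra, fun i => (r.mem_rep hM _ _).1 (hz i)⟩
      rw [r.mem_rep hM, ← hM.ax1]
      exact (s.mem_rep hM b y).1 hy
  · intro a i x y
    constructor
    · intro hy
      obtain ⟨U, v, r⟩ := hM.rep_of_mem hy
      rw [r.mem_rep hM] at hy
      have ha : Agree U (M.comp v a) M.zero := by
        by_contra ha
        exact y.ne_zero hM hy (r.ultra.anti_agree_zero hM ha i)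
      refine ⟨Subtype.ext ?_, r.related, fun hd => (r.dom_iff hM a).1 hd ha⟩
      rw [hy, r.eq, r.ultra.tag_eq hM]
      exact r.ultra.anti_agree hM (r.ne_zero hM) ha i
    · rintro ⟨rfl, hE, hd⟩
      obtain ⟨U, v, r⟩ := exists_rep x hE
      rw [r.dom_iff hM, not_not] at hd
      rw [r.mem_rep hM, r.eq, r.ultra.tag_eq hM]
      exact (r.ultra.anti_agree hM (r.ne_zero hM) hd i).symm
  · intro a b x y
    constructor
    · intro hy
      obtain ⟨U, v, r⟩ := hM.rep_of_mem hy
      rw [r.mem_rep hM, hM.ax23] at hy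
      have hm := y.ne_zero hM hy
      rw [r.mem_rep hM, r.mem_rep hM, hy, r.ultra.tag_eq hM, r.ultra.tag_eq hM]
      refine ⟨r.ultra.meet_agree_left hM hm, ?_⟩
      rw [hM.ax22] at hm ⊢
      exact r.ultra.meet_agree_left hM hm
    · rintro ⟨ha, hb⟩
      obtain ⟨U, v, r⟩ := hM.rep_of_mem ha
      rw [r.mem_rep hM] at ha hb ⊢
      rw [ha, hM.ax23, r.ultra.tag_eq hM]
      rw [ha, r.ultra.tag_eq hM] at hb
      exact (r.ultra.meet_agree hM hb).symm
end

section
/- If A is a set with operations ⟨a₁,…,aₙ⟩∘b, antidomain operations A₁,…,Aₙ and a binary operation ∧ satisfying the equational axioms (1)–(6), (8), (9) and (21)–(27), then A satisfies the quasiequation (7): for all a, b, c ∈ A, if ⟨Da⟩∘b = ⟨Da⟩∘c and ⟨Aa⟩∘b = ⟨Aa⟩∘c then b = c. -/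
namespace MAlgM

variable {n : ℕ} {A : Type*} [Inhabited A] {M : MAlgM n A}

lemma Ax.comp_avec_self (hM : M.Ax) (a : A) : M.comp (M.avec a) a = M.zero :=
  hM.ax3 a default

lemma Ax.dvec_eq (hM : M.Ax) (j : Fin n) (a : A) : M.dvec a = M.avec (M.anti j a) := by
  funext i
  exact hM.ax9 i i j a

lemma Ax.dvec_anti (hM : M.Ax) (i j : Fin n) (a : A) :
    M.dvec (M.anti i a) = M.dvec (M.anti j a) := by
  funext k
  change M.anti k (M.anti k (M.anti i a)) = M.anti k (M.anti k (M.anti j a))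
  rw [hM.ax9 k i j a]

/-- The chain of domains in (6) acts trivially: all `⟨D(Aⱼa)⟩` are equal to `⟨D(Aᵢa)⟩`, which
fixes `Aᵢa` by (8). -/
lemma Ax.dchain_avec_s19 (hM : M.Ax) (i : Fin n) (a : A) :
    M.dchain (M.avec a) (M.anti i a) = M.anti i a := by
  unfold dchain
  have h : ∀ u ∈ List.ofFn (M.avec a), M.comp (M.dvec u) (M.anti i a) = M.anti i a := by
    intro u hu
    obtain ⟨j, rfl⟩ := (List.mem_ofFn' _ _).1 hu
    change M.comp (M.dvec (M.anti j a)) _ = _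
    rw [hM.dvec_anti j i, hM.ax8]
  generalize List.ofFn (M.avec a) = l at h
  induction l with
  | nil => rfl
  | cons u l ih =>
    rw [List.foldr_cons, ih fun v hv => h v (List.mem_cons_of_mem _ hv)]
    exact h u List.mem_cons_self

lemma Ax.comp_avec_anti (hM : M.Ax) (i : Fin n) (a : A) :
    M.comp (M.avec a) (M.anti i a) = M.anti i a := by
  rw [hM.ax6, hM.comp_avec_self]
  change M.comp M.pi (M.dchain (M.avec a) (M.anti i a)) = _
  rw [hM.ax2, hM.dchain_avec_s19]

lemma Ax.tie_self_s19 (hM : M.Ax) (i : Fin n) (a : A) : M.tie i a a = M.pi i := by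
  unfold tie plus
  rw [hM.ax21, hM.comp_avec_anti]
  exact congrArg (M.anti i) (hM.comp_avec_self (M.dom i a))

lemma Ax.comp_avec_tie (hM : M.Ax) (i : Fin n) (a b c : A)
    (h : M.comp (M.avec a) b = M.comp (M.avec a) c) :
    M.comp (M.avec a) (M.tie i b c) = M.comp (M.avec a) (M.tie i b b) := by
  rw [← hM.ax26, ← hM.ax26, hM.ax23, hM.ax23, ← h]

end MAlgM

/-- An algebra with meet satisfying the equational axioms (1)–(6), (8), (9) and
(21)–(27) satisfies the quasiequation (7). -/
theorem meet_implies_quasiequation {n : ℕ} (hn : 1 ≤ n) {A : Type*}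
    [Inhabited A] (M : MAlgM n A) (hM : M.Ax) (a b c : A)
    (hD : M.comp (M.dvec a) b = M.comp (M.dvec a) c)
    (hA : M.comp (M.avec a) b = M.comp (M.avec a) c) :
    b = c := by
  have key : (fun i => M.tie i b c) = M.pi := by
    funext i
    rw [hM.dvec_eq i] at hD
    rw [← hM.tie_self_s19 i b, ← hM.ax27 i a b c, ← hM.ax27 i a b b, hM.dvec_eq i,
      hM.comp_avec_tie i a b c hA, hM.comp_avec_tie i _ b c hD]
  have h := hM.ax25 b c
  rwa [key, hM.ax2, hM.ax2] at h
end
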